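/- Let D = (V, E; c; s, t) be a flow network in which every arc belongs to at least one s-t path. If the associated flow game Γ_D is convex, then the directed graph (V, E) is acyclic, i.e., it contains no directed cycle. -/

import Mathlib

open scoped Classical
open Finset

noncomputable section

/-- The arcs (consecutive vertex pairs) of a vertex list. -/
def arcsOf {V : Type*} [DecidableEq V] (vs : List V) : Finset (V × V) :=
  (vs.zip vs.tail).toFinset

/-- `vs` is the vertex list of a directed path from `a` to `b` using arcs of `E`,
with pairwise distinct vertices. -/
def IsPathList {V : Type*} (E : Finset (V × V)) (a b : V) (vs : List V) : Prop :=
  vs.Nodup ∧ vs.head? = some a ∧ vs.getLast? = some b ∧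
    vs.Chain' (fun x y => (x, y) ∈ E)

/-- `P` is (the arc set of) an `s`-`t` path in the network with arc set `E`. -/
def IsSTPath {V : Type*} [DecidableEq V] (E : Finset (V × V)) (s t : V)
    (P : Finset (V × V)) : Prop :=
  ∃ vs : List V, IsPathList E s t vs ∧ P = arcsOf vs

/-- The capacity of a path (arc set): the minimum capacity of its arcs. -/
def pathCap {V : Type*} (c : V × V → ℝ) (P : Finset (V × V)) : ℝ :=
  sInf (c '' (P : Set (V × V)))

/-- `e` is a bottleneck arc of some `s`-`t` path, i.e. `e ∈ B`. -/
def IsBottleneck {V : Type*} [DecidableEq V] (E : Finset (V × V)) (c : V × V → ℝ)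
    (s t : V) (e : V × V) : Prop :=
  ∃ P : Finset (V × V), IsSTPath E s t P ∧ e ∈ P ∧ c e = pathCap c P

/-- The finite set `𝒫` of all `s`-`t` paths (as arc sets). -/
def stPaths {V : Type*} [DecidableEq V] (E : Finset (V × V)) (s t : V) :
    Finset (Finset (V × V)) :=
  E.powerset.filter (fun P => IsSTPath E s t P)

/-- The value of a flow `f`: net flow out of the source `s`. -/
def flowValue {V : Type*} [DecidableEq V] (E : Finset (V × V)) (s : V)
    (f : V × V → ℝ) : ℝ :=
  ∑ e ∈ E.filter (fun e => e.1 = s), f e - ∑ e ∈ E.filter (fun e => e.2 = s), f e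

/-- `f` is a feasible flow on the coalition `S`. -/
def IsFeasibleFlow {V : Type*} [DecidableEq V] (E : Finset (V × V)) (c : V × V → ℝ)
    (s t : V) (S : Finset (V × V)) (f : V × V → ℝ) : Prop :=
  (∀ e ∈ E, 0 ≤ f e ∧ f e ≤ c e) ∧
  (∀ e, e ∉ S → f e = 0) ∧
  (∀ v, v ≠ s → v ≠ t →
    ∑ e ∈ E.filter (fun e => e.2 = v), f e = ∑ e ∈ E.filter (fun e => e.1 = v), f e)

/-- `γ` is the characteristic function of the flow game on `D = (V,E;c;s,t)`:
for each coalition `S ⊆ E`, `γ S` is the maximum value of a feasible flow on `S`. -/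
def IsFlowGame {V : Type*} [DecidableEq V] (E : Finset (V × V)) (c : V × V → ℝ)
    (s t : V) (γ : Finset (V × V) → ℝ) : Prop :=
  ∀ S : Finset (V × V), S ⊆ E →
    IsGreatest {x : ℝ | ∃ f, IsFeasibleFlow E c s t S f ∧ flowValue E s f = x} (γ S)

/-- The cooperative game `γ` with player set `E` is convex (supermodular). -/
def GameConvex {V : Type*} [DecidableEq V] (E : Finset (V × V))
    (γ : Finset (V × V) → ℝ) : Prop :=
  ∀ e ∈ E, ∀ S T : Finset (V × V), S ⊆ T → T ⊆ E.erase e →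
    γ (insert e S) - γ S ≤ γ (insert e T) - γ T

/-- The directed graph with arc set `E` contains a directed cycle. -/
def HasDirectedCycle {V : Type*} (E : Finset (V × V)) : Prop :=
  ∃ (v : V) (vs : List V), (v :: vs).Nodup ∧
    (v :: vs).Chain' (fun x y => (x, y) ∈ E) ∧
    ((v :: vs).getLast (List.cons_ne_nil v vs), v) ∈ E

/-!
Convexity makes every arc `e` of minimum capacity on an `s`-`t` path `P` private to `P`. Otherwise
let `Q` be another path through `e`. In `P ∪ Q` the flow on `e` divides, before or after `e`, between
an arc of `P` only and an arc of `Q` only, so that with both paths present `e` would have to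
contribute its full capacity to `P` and a positive amount to `Q` at the same time.

If every path has a private arc and the paths cover all arcs, there is no cycle: subtract a cycle
from the sum `F` of all paths. The rest has the same value and decomposes into paths, where the
private arcs bound each multiplicity by one; so each multiplicity is one and the rest is still at
least `F`, a contradiction.
-/

theorem IsPathList.tail {V : Type*} {E : Finset (V × V)} {a b t : V} {l : List V}
    (h : IsPathList E a t (a :: b :: l)) : IsPathList E b t (b :: l) :=
  ⟨h.1.of_cons, rfl, by simpa using h.2.2.1, h.2.2.2.tail⟩

theorem IsPathList.eq_sink_of_suffix {V : Type*} {E : Finset (V × V)} {s t a b : V} {l : List V}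
    (h : IsPathList E s t l) (hab : [a, b] <:+ l) : b = t := by
  obtain ⟨l', rfl⟩ := hab
  simpa using h.2.2.1

theorem exists_isPathList_of_reflTransGen {V : Type*} {E : Finset (V × V)} {s t : V}
    (h : Relation.ReflTransGen (fun x y => (x, y) ∈ E) s t) : ∃ l, IsPathList E s t l := by
  induction h with
  | refl => exact ⟨[s], by simp, rfl, rfl, List.isChain_singleton s⟩
  | @tail b c _ hbc ih =>
    obtain ⟨l, hnodup, hhead, hlast, hchain⟩ := ih
    by_cases hc : c ∈ l
    · obtain ⟨X, Y, rfl⟩ := List.append_of_mem hc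
      have hpre : X ++ [c] <+: X ++ c :: Y := ⟨Y, by simp⟩
      exact ⟨X ++ [c], hnodup.sublist hpre.sublist, by cases X <;> simpa using hhead, by simp,
        hchain.infix hpre.isInfix⟩
    · refine ⟨l ++ [c], ?_, by simp [hhead], by simp, ?_⟩
      · simpa [List.nodup_append] using ⟨hnodup, fun a ha hac => hc (hac ▸ ha)⟩
      · exact hchain.append (by simp) (by simpa [hlast] using hbc)

section Arcs

variable {V : Type*} [DecidableEq V] {E F : Finset (V × V)} {s t a b : V} {l l₁ l₂ : List V}

theorem arcsOf_singleton (a : V) : arcsOf [a] = ∅ := by simp [arcsOf]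

theorem arcsOf_cons_cons (a b : V) (l : List V) :
    arcsOf (a :: b :: l) = insert (a, b) (arcsOf (b :: l)) := by
  simp [arcsOf]

theorem mem_arcsOf_iff_infix : (a, b) ∈ arcsOf l ↔ [a, b] <:+: l := by
  induction l with
  | nil => simp [arcsOf]
  | cons u l ih =>
    cases l with
    | nil => simp [arcsOf, List.infix_cons_iff]
    | cons w l => simp [arcsOf_cons_cons, List.infix_cons_iff (a := u), ih]

theorem mem_arcsOf_of_suffix (h : a :: b :: l₁ <:+ l) : (a, b) ∈ arcsOf l :=
  mem_arcsOf_iff_infix.2 ((List.prefix_append [a, b] l₁).isInfix.trans h.isInfix)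

theorem arcsOf_subset_iff_isChain : arcsOf l ⊆ E ↔ l.IsChain fun x y => (x, y) ∈ E := by
  rw [List.isChain_iff_forall_rel_of_append_cons_cons]
  constructor
  · rintro h a b X Y rfl
    exact h (mem_arcsOf_of_suffix (List.suffix_append X (a :: b :: Y)))
  · rintro h ⟨a, b⟩ hab
    obtain ⟨X, Y, rfl⟩ := mem_arcsOf_iff_infix.1 hab
    exact h (List.append_assoc X [a, b] Y)

theorem mem_arcsOf_reverse : (a, b) ∈ arcsOf l.reverse ↔ (b, a) ∈ arcsOf l := by
  simp only [mem_arcsOf_iff_infix, ← List.reverse_infix (l₁ := [b, a]), List.reverse_cons,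
    List.reverse_nil, List.nil_append, List.singleton_append]

theorem arcsOf_reverse (l : List V) : arcsOf l.reverse = (arcsOf l).image Prod.swap := by
  ext ⟨a, b⟩
  simp [mem_arcsOf_reverse, Prod.ext_iff]

theorem fst_mem_of_mem_arcsOf {e : V × V} (h : e ∈ arcsOf l) : e.1 ∈ l :=
  (List.of_mem_zip (List.mem_toFinset.1 h)).1

theorem snd_mem_tail_of_mem_arcsOf {e : V × V} (h : e ∈ arcsOf l) : e.2 ∈ l.tail :=
  (List.of_mem_zip (List.mem_toFinset.1 h)).2

theorem snd_eq_of_mem_arcsOf {b' : V} (hl : l.Nodup) (h : (a, b) ∈ arcsOf l)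
    (h' : (a, b') ∈ arcsOf l) : b = b' := by
  induction l with
  | nil => simp [arcsOf] at h
  | cons u l ih =>
    cases l with
    | nil => simp [arcsOf] at h
    | cons w l =>
      obtain ⟨hu, hl⟩ := List.nodup_cons.1 hl
      rw [arcsOf_cons_cons, mem_insert, Prod.mk.injEq] at h h'
      rcases h with ⟨rfl, rfl⟩ | h <;> rcases h' with ⟨ha, rfl⟩ | h'
      · rfl
      · exact absurd (fst_mem_of_mem_arcsOf h') hu
      · exact absurd (ha ▸ fst_mem_of_mem_arcsOf h) hu
      · exact ih hl h h'

theorem fst_eq_of_mem_arcsOf {a' : V} (hl : l.Nodup) (h : (a, b) ∈ arcsOf l)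
    (h' : (a', b) ∈ arcsOf l) : a = a' :=
  snd_eq_of_mem_arcsOf (List.nodup_reverse.2 hl) (mem_arcsOf_reverse.2 h) (mem_arcsOf_reverse.2 h')

theorem isPathList_iff_arcsOf_subset : IsPathList E s t l ↔
    l.Nodup ∧ l.head? = some s ∧ l.getLast? = some t ∧ arcsOf l ⊆ E := by
  rw [arcsOf_subset_iff_isChain]
  rfl

theorem IsPathList.reverse (h : IsPathList E s t l) :
    IsPathList (E.image Prod.swap) t s l.reverse := by
  obtain ⟨hnodup, hhead, hlast, hE⟩ := isPathList_iff_arcsOf_subset.1 h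
  refine isPathList_iff_arcsOf_subset.2 ⟨List.nodup_reverse.2 hnodup, ?_, ?_, ?_⟩
  · rw [List.head?_reverse, hlast]
  · rw [List.getLast?_reverse, hhead]
  · rw [arcsOf_reverse]
    exact image_subset_image hE

theorem IsPathList.snd_ne_source (h : IsPathList E s t l) (hab : (a, b) ∈ arcsOf l) : b ≠ s := by
  obtain ⟨l', rfl⟩ := List.head?_eq_some_iff.1 h.2.1
  rintro rfl
  exact (List.nodup_cons.1 h.1).1 (snd_mem_tail_of_mem_arcsOf hab)

theorem IsPathList.fst_ne_sink (h : IsPathList E s t l) (hab : (a, b) ∈ arcsOf l) : a ≠ t :=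
  h.reverse.snd_ne_source (mem_arcsOf_reverse.2 hab)

theorem IsPathList.eq_of_arcsOf_subset (h₁ : IsPathList E s t l₁) (h₂ : IsPathList F s t l₂)
    (hsub : arcsOf l₁ ⊆ arcsOf l₂) : l₁ = l₂ := by
  induction l₁ generalizing s l₂ with
  | nil => simp [IsPathList] at h₁
  | cons u r₁ ih =>
    obtain rfl : u = s := by simpa using h₁.2.1
    obtain ⟨r₂, rfl⟩ := List.head?_eq_some_iff.1 h₂.2.1
    match r₁, r₂ with
    | [], [] => rfl
    | [], w₂ :: r₂ =>
      have hut : u = t := by simpa using h₁.2.2.1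
      exact absurd hut (h₂.fst_ne_sink (mem_arcsOf_of_suffix List.suffix_rfl))
    | w₁ :: r₁, [] => simp [arcsOf_cons_cons, arcsOf_singleton] at hsub
    | w₁ :: r₁, w₂ :: r₂ =>
      obtain rfl : w₁ = w₂ := snd_eq_of_mem_arcsOf h₂.1
        (hsub (mem_arcsOf_of_suffix List.suffix_rfl)) (mem_arcsOf_of_suffix List.suffix_rfl)
      refine congrArg (u :: ·) (ih h₁.tail h₂.tail fun e he => ?_)
      have hne : e ≠ (u, w₁) := by
        rintro rfl
        exact (List.nodup_cons.1 h₁.1).1 (fst_mem_of_mem_arcsOf he)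
      have hmem := hsub (arcsOf_cons_cons u w₁ r₁ ▸ mem_insert_of_mem he)
      exact mem_of_mem_insert_of_ne (arcsOf_cons_cons u w₁ r₂ ▸ hmem) hne

theorem IsSTPath.subset {P : Finset (V × V)} (hP : IsSTPath E s t P) : P ⊆ E := by
  obtain ⟨l, hl, rfl⟩ := hP
  exact (isPathList_iff_arcsOf_subset.1 hl).2.2.2

theorem IsSTPath.of_subset {P : Finset (V × V)} (hP : IsSTPath E s t P) (h : P ⊆ F) :
    IsSTPath F s t P := by
  obtain ⟨l, hl, rfl⟩ := hP
  exact ⟨l, ⟨hl.1, hl.2.1, hl.2.2.1, arcsOf_subset_iff_isChain.1 h⟩, rfl⟩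

theorem mem_stPaths {P : Finset (V × V)} : P ∈ stPaths E s t ↔ IsSTPath E s t P := by
  simpa [stPaths] using IsSTPath.subset

theorem IsSTPath.nonempty {P : Finset (V × V)} (hP : IsSTPath E s t P) (hst : s ≠ t) :
    P.Nonempty := by
  obtain ⟨l, hl, rfl⟩ := hP
  match l with
  | [] => simp [IsPathList] at hl
  | [a] => exact absurd (by simpa using hl.2.1.symm.trans hl.2.2.1) hst
  | a :: b :: l => exact ⟨(a, b), mem_arcsOf_of_suffix List.suffix_rfl⟩

theorem IsSTPath.eq_of_subset {P Q : Finset (V × V)} (hP : IsSTPath E s t P)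
    (hQ : IsSTPath F s t Q) (h : P ⊆ Q) : P = Q := by
  obtain ⟨l₁, hl₁, rfl⟩ := hP
  obtain ⟨l₂, hl₂, rfl⟩ := hQ
  rw [hl₁.eq_of_arcsOf_subset hl₂ h]

end Arcs

section Flows

variable {V : Type*} [Fintype V]

/-- The net outflow `∑ w, g (v, w) - ∑ u, g (u, v)` of an arc function at each vertex. It sums over
all ordered pairs of vertices, so it agrees with the net outflow in a network with arc set `E` only
for functions vanishing outside `E`. -/
def netOutflow : (V × V → ℝ) →ₗ[ℝ] V → ℝ where
  toFun g v := ∑ w, g (v, w) - ∑ u, g (u, v)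
  map_add' g h := by
    ext v
    simp only [Pi.add_apply, sum_add_distrib]
    ring
  map_smul' r g := by
    ext v
    simp only [Pi.smul_apply, smul_eq_mul, ← mul_sum, RingHom.id_apply]
    ring

theorem netOutflow_apply (g : V × V → ℝ) (v : V) :
    netOutflow g v = ∑ w, g (v, w) - ∑ u, g (u, v) := rfl

theorem netOutflow_comp_swap (g : V × V → ℝ) (v : V) :
    netOutflow (g ∘ Prod.swap) v = -netOutflow g v := by
  simp [netOutflow_apply]

theorem sum_netOutflow_nonpos {g : V × V → ℝ} (hg : 0 ≤ g) {R : Finset V}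
    (hR : ∀ v ∈ R, ∀ w ∉ R, g (v, w) = 0) : ∑ v ∈ R, netOutflow g v ≤ 0 := by
  have hout : ∑ v ∈ R, ∑ w, g (v, w) ≤ ∑ w ∈ R, ∑ v, g (v, w) :=
    calc ∑ v ∈ R, ∑ w, g (v, w)
        = ∑ v ∈ R, ∑ w ∈ R, g (v, w) := sum_congr rfl fun v hv =>
          (sum_subset (subset_univ R) fun w _ hw => hR v hv w hw).symm
      _ = ∑ w ∈ R, ∑ v ∈ R, g (v, w) := sum_comm
      _ ≤ ∑ w ∈ R, ∑ v, g (v, w) := sum_le_sum fun w _ =>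
          sum_le_sum_of_subset_of_nonneg (subset_univ R) fun v _ _ => hg (v, w)
  simpa only [netOutflow_apply, sum_sub_distrib, sub_nonpos] using hout

/-- `g` is a nonnegative `s`-`t` flow using only arcs of `S`, with no capacity bound. -/
structure IsFlow (S : Finset (V × V)) (s t : V) (g : V × V → ℝ) : Prop where
  nonneg : 0 ≤ g
  eq_zero : ∀ e ∉ S, g e = 0
  conserve : ∀ v, v ≠ s → v ≠ t → netOutflow g v = 0

namespace IsFlow

variable {S S' : Finset (V × V)} {s t : V} {g h : V × V → ℝ}

theorem mono (hg : IsFlow S s t g) (hS : S ⊆ S') : IsFlow S' s t g :=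
  ⟨hg.nonneg, fun e he => hg.eq_zero e fun h => he (hS h), hg.conserve⟩

theorem erase [DecidableEq V] {e : V × V} (hg : IsFlow S s t g) (he : g e = 0) :
    IsFlow (S.erase e) s t g where
  nonneg := hg.nonneg
  eq_zero x hx := by
    by_cases hxe : x = e
    · rw [hxe, he]
    · exact hg.eq_zero x fun h => hx (mem_erase.2 ⟨hxe, h⟩)
  conserve := hg.conserve

theorem smul (hg : IsFlow S s t g) {r : ℝ} (hr : 0 ≤ r) : IsFlow S s t (r • g) where
  nonneg := smul_nonneg hr hg.nonneg
  eq_zero e he := by simp [hg.eq_zero e he]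
  conserve v hs ht := by simp [hg.conserve v hs ht]

theorem sub (hg : IsFlow S s t g) (hh : IsFlow S s t h) (hle : h ≤ g) : IsFlow S s t (g - h) where
  nonneg := sub_nonneg.2 hle
  eq_zero e he := by simp [hg.eq_zero e he, hh.eq_zero e he]
  conserve v hs ht := by simp [hg.conserve v hs ht, hh.conserve v hs ht]

theorem sum {ι : Type*} {A : Finset ι} {g : ι → V × V → ℝ} (hg : ∀ i ∈ A, IsFlow S s t (g i)) :
    IsFlow S s t (∑ i ∈ A, g i) where
  nonneg := sum_nonneg fun i hi => (hg i hi).nonneg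
  eq_zero e he := by
    rw [Finset.sum_apply]
    exact sum_eq_zero fun i hi => (hg i hi).eq_zero e he
  conserve v hs ht := by
    rw [map_sum, Finset.sum_apply]
    exact sum_eq_zero fun i hi => (hg i hi).conserve v hs ht

theorem comp_swap [DecidableEq V] (hg : IsFlow S s t g) :
    IsFlow (S.image Prod.swap) t s (g ∘ Prod.swap) where
  nonneg e := hg.nonneg e.swap
  eq_zero e he := hg.eq_zero e.swap fun h => he (mem_image.2 ⟨e.swap, h, e.swap_swap⟩)
  conserve v ht hs := by rw [netOutflow_comp_swap, hg.conserve v hs ht, neg_zero]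

/-- The vertices reachable along arcs of positive flow form a set that no flow leaves. -/
theorem exists_isSTPath_pos [DecidableEq V] (hg : IsFlow S s t g) (hpos : 0 < netOutflow g s) :
    ∃ P, IsSTPath S s t P ∧ ∀ e ∈ P, 0 < g e := by
  set F := S.filter fun e => 0 < g e with hF
  let Reach := Relation.ReflTransGen fun x y => (x, y) ∈ F
  suffices hreach : Reach s t by
    obtain ⟨l, hl⟩ := exists_isPathList_of_reflTransGen hreach
    have hP : IsSTPath F s t (arcsOf l) := ⟨l, hl, rfl⟩
    exact ⟨_, hP.of_subset (hP.subset.trans (filter_subset _ S)),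
      fun e he => (mem_filter.1 (hP.subset he)).2⟩
  by_contra hreach
  have hclosed : ∀ v ∈ univ.filter (Reach s), ∀ w ∉ univ.filter (Reach s), g (v, w) = 0 := by
    intro v hv w hw
    simp only [mem_filter_univ] at hv hw
    by_contra hne
    have hmem : (v, w) ∈ S := by_contra fun h => hne (hg.eq_zero _ h)
    exact hw (hv.tail (mem_filter.2 ⟨hmem, (hg.nonneg _).lt_of_ne' hne⟩))
  have hsum : ∑ v ∈ univ.filter (Reach s), netOutflow g v = netOutflow g s :=
    sum_eq_single_of_mem s (by simpa using Relation.ReflTransGen.refl) fun v hv hvs =>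
      hg.conserve v hvs (by rintro rfl; exact hreach (mem_filter_univ v |>.1 hv))
  exact absurd (sum_netOutflow_nonpos hg.nonneg hclosed) (by rw [hsum]; exact hpos.not_ge)

end IsFlow

end Flows

section UnitFlow

variable {V : Type*} {s t : V} {S P : Finset (V × V)}

/-- The arc function sending one unit along every arc of `P`. -/
def unitFlow (P : Finset (V × V)) : V × V → ℝ := (P : Set (V × V)).indicator 1

theorem unitFlow_apply_of_mem {e : V × V} (he : e ∈ P) : unitFlow P e = 1 :=
  Set.indicator_of_mem (mem_coe.2 he) 1

theorem unitFlow_apply_of_notMem {e : V × V} (he : e ∉ P) : unitFlow P e = 0 :=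
  Set.indicator_of_notMem (mt mem_coe.1 he) 1

theorem unitFlow_nonneg (P : Finset (V × V)) : 0 ≤ unitFlow P :=
  Set.indicator_nonneg fun _ _ => zero_le_one

theorem smul_unitFlow_le {g : V × V → ℝ} {r : ℝ} (hg : 0 ≤ g) (hr : ∀ e ∈ P, r ≤ g e) :
    r • unitFlow P ≤ g := by
  intro e
  by_cases he : e ∈ P
  · simpa [unitFlow_apply_of_mem he] using hr e he
  · simpa [unitFlow_apply_of_notMem he] using hg e

theorem unitFlow_empty : unitFlow (∅ : Finset (V × V)) = 0 := by
  ext e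
  simp [unitFlow]

theorem unitFlow_insert [DecidableEq V] {e : V × V} (he : e ∉ P) :
    unitFlow (insert e P) = Pi.single e 1 + unitFlow P := by
  ext x
  by_cases hx : x = e
  · subst hx
    simp [unitFlow_apply_of_mem, unitFlow_apply_of_notMem he]
  · simp [unitFlow, Set.indicator_apply, hx]

theorem sum_smul_unitFlow_apply_of_private {A : Finset (Finset (V × V))} {e : V × V}
    (hP : P ∈ A) (he : e ∈ P) (honly : ∀ Q ∈ A, e ∈ Q → Q = P)
    (m : Finset (V × V) → ℝ) : (∑ Q ∈ A, m Q • unitFlow Q) e = m P := by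
  rw [Finset.sum_apply, sum_eq_single_of_mem P hP fun Q hQ hne => ?_]
  · simp [unitFlow_apply_of_mem he]
  · simp [unitFlow_apply_of_notMem fun h => hne (honly Q hQ h)]

variable [Fintype V] [DecidableEq V]

theorem netOutflow_single (a b : V) :
    netOutflow (Pi.single (a, b) 1) = (Pi.single a 1 - Pi.single b 1 : V → ℝ) := by
  ext v
  simp [netOutflow_apply, Pi.single_apply, ite_and]

theorem netOutflow_unitFlow_arcsOf {l : List V} (hnodup : l.Nodup) (hhead : l.head? = some s)
    (hlast : l.getLast? = some t) :
    netOutflow (unitFlow (arcsOf l)) = Pi.single s 1 - Pi.single t 1 := by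
  induction l generalizing s with
  | nil => simp at hhead
  | cons a l ih =>
    obtain rfl : a = s := by simpa using hhead
    cases l with
    | nil =>
      obtain rfl : a = t := by simpa using hlast
      rw [arcsOf_singleton, unitFlow_empty, map_zero, sub_self]
    | cons b l =>
      have hab : (a, b) ∉ arcsOf (b :: l) := fun h =>
        (List.nodup_cons.1 hnodup).1 (fst_mem_of_mem_arcsOf h)
      rw [arcsOf_cons_cons, unitFlow_insert hab, map_add, netOutflow_single,
        ih hnodup.of_cons rfl (by simpa using hlast)]
      abel

theorem IsSTPath.netOutflow_unitFlow (hP : IsSTPath S s t P) :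
    netOutflow (unitFlow P) = Pi.single s 1 - Pi.single t 1 := by
  obtain ⟨l, ⟨hnodup, hhead, hlast, -⟩, rfl⟩ := hP
  exact netOutflow_unitFlow_arcsOf hnodup hhead hlast

theorem IsSTPath.isFlow_unitFlow (hP : IsSTPath S s t P) : IsFlow S s t (unitFlow P) where
  nonneg := unitFlow_nonneg P
  eq_zero _ he := unitFlow_apply_of_notMem fun h => he (hP.subset h)
  conserve v hs ht := by simp [hP.netOutflow_unitFlow, hs, ht]

theorem netOutflow_sum_smul_unitFlow (hst : s ≠ t) {A : Finset (Finset (V × V))}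
    (hA : ∀ P ∈ A, IsSTPath S s t P) (m : Finset (V × V) → ℝ) :
    netOutflow (∑ P ∈ A, m P • unitFlow P) s = ∑ P ∈ A, m P := by
  rw [map_sum, Finset.sum_apply]
  refine sum_congr rfl fun P hP => ?_
  simp [(hA P hP).netOutflow_unitFlow, hst]

end UnitFlow

theorem HasDirectedCycle.exists_netOutflow_unitFlow_eq_zero {V : Type*} [Fintype V]
    {E : Finset (V × V)}
    (h : HasDirectedCycle E) : ∃ C ⊆ E, C.Nonempty ∧ netOutflow (unitFlow C) = 0 := by
  obtain ⟨v, vs, hnodup, hchain, hclose⟩ := h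
  set z := (v :: vs).getLast (List.cons_ne_nil v vs)
  have hnotMem : (z, v) ∉ arcsOf (v :: vs) := fun h =>
    (List.nodup_cons.1 hnodup).1 (snd_mem_tail_of_mem_arcsOf h)
  refine ⟨insert (z, v) (arcsOf (v :: vs)),
    insert_subset hclose (arcsOf_subset_iff_isChain.2 hchain), insert_nonempty _ _, ?_⟩
  rw [unitFlow_insert hnotMem, map_add, netOutflow_single,
    netOutflow_unitFlow_arcsOf hnodup rfl (List.getLast?_eq_some_getLast (List.cons_ne_nil v vs))]
  exact sub_add_sub_cancel _ _ _ |>.trans (sub_self _)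

section Decomposition

variable {V : Type*} [Fintype V] [DecidableEq V] {E : Finset (V × V)} {s t : V} {g : V × V → ℝ}

theorem IsFlow.exists_sub_smul_unitFlow (hst : s ≠ t) (hg : IsFlow E s t g)
    (hpos : 0 < netOutflow g s) :
    ∃ P ∈ stPaths E s t, ∃ r : ℝ, 0 ≤ r ∧ IsFlow E s t (g - r • unitFlow P) ∧
      #{e | 0 < (g - r • unitFlow P) e} < #{e | 0 < g e} := by
  obtain ⟨P, hP, hPpos⟩ := hg.exists_isSTPath_pos hpos
  obtain ⟨y, hy, hmin⟩ := exists_min_image P g (hP.nonempty hst)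
  have hr : 0 ≤ g y := hg.nonneg y
  refine ⟨P, mem_stPaths.2 hP, g y, hr,
    hg.sub (hP.isFlow_unitFlow.smul hr) (smul_unitFlow_le hg.nonneg hmin), card_lt_card ?_⟩
  refine (ssubset_iff_of_subset fun e he => ?_).2 ⟨y, by simpa using hPpos y hy, ?_⟩
  · have hle : (g - g y • unitFlow P) e ≤ g e :=
      sub_le_self (g e) (mul_nonneg hr (unitFlow_nonneg P e))
    exact mem_filter_univ e |>.2 ((mem_filter_univ e |>.1 he).trans_le hle)
  · simp [unitFlow_apply_of_mem hy]

theorem IsFlow.exists_path_decomposition (hst : s ≠ t) (hg : IsFlow E s t g) :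
    ∃ m : Finset (V × V) → ℝ, 0 ≤ m ∧ ∑ P ∈ stPaths E s t, m P • unitFlow P ≤ g ∧
      netOutflow g s ≤ ∑ P ∈ stPaths E s t, m P := by
  induction hn : #{e | 0 < g e} using Nat.strong_induction_on generalizing g with
  | _ n ih =>
    subst hn
    rcases le_or_gt (netOutflow g s) 0 with hnonpos | hpos
    · exact ⟨0, le_rfl, by simpa using hg.nonneg, by simpa using hnonpos⟩
    obtain ⟨P, hP, r, hr, hflow, hcard⟩ := hg.exists_sub_smul_unitFlow hst hpos
    obtain ⟨m, hm, hle, hval⟩ := ih _ hcard hflow rfl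
    have hsum : ∑ Q ∈ stPaths E s t, (m + Pi.single P r : Finset (V × V) → ℝ) Q • unitFlow Q =
        ∑ Q ∈ stPaths E s t, m Q • unitFlow Q + r • unitFlow P := by
      simp [add_smul, sum_add_distrib, Pi.single_apply, ite_smul, hP]
    refine ⟨m + Pi.single P r, add_nonneg hm (Pi.single_nonneg.2 hr), ?_, ?_⟩
    · rw [hsum]
      exact le_sub_iff_add_le.1 hle
    · have hsource : netOutflow (r • unitFlow P) s = r := by
        simp [(mem_stPaths.1 hP).netOutflow_unitFlow, hst]
      rw [map_sub, Pi.sub_apply, hsource] at hval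
      simpa [sum_add_distrib, Pi.single_apply, hP] using hval

/-- The difference of the two flows decomposes into paths of the same total value as the sum of all
paths, and the private arcs bound every multiplicity by one; so every path is used fully, and
nothing has been subtracted. -/
theorem IsFlow.nonpos_of_le_sum_unitFlow (hst : s ≠ t)
    (hprivate : ∀ P ∈ stPaths E s t, ∃ e ∈ P, ∀ Q ∈ stPaths E s t, e ∈ Q → Q = P)
    (hg : IsFlow E s t g) (hle : g ≤ ∑ P ∈ stPaths E s t, unitFlow P)
    (hval : netOutflow g s = 0) : g ≤ 0 := by
  have hpath : ∀ P ∈ stPaths E s t, IsSTPath E s t P := fun P => mem_stPaths.1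
  set F : V × V → ℝ := ∑ P ∈ stPaths E s t, unitFlow P with hF
  have hF_smul : F = ∑ P ∈ stPaths E s t, (1 : Finset (V × V) → ℝ) P • unitFlow P := by simp [hF]
  have hF_flow : IsFlow E s t F := IsFlow.sum fun P hP => (hpath P hP).isFlow_unitFlow
  obtain ⟨m, -, hm_le, hm_val⟩ := (hF_flow.sub hg hle).exists_path_decomposition hst
  have hm_one : ∀ P ∈ stPaths E s t, m P ≤ (1 : Finset (V × V) → ℝ) P := by
    intro P hP
    obtain ⟨e, he, honly⟩ := hprivate P hP
    have hle_F := (hm_le e).trans (sub_le_self (F e) (hg.nonneg e))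
    rwa [hF_smul, sum_smul_unitFlow_apply_of_private hP he honly,
      sum_smul_unitFlow_apply_of_private hP he honly] at hle_F
  have hm_eq : ∀ P ∈ stPaths E s t, m P = (1 : Finset (V × V) → ℝ) P := by
    refine (sum_eq_sum_iff_of_le hm_one).1 (le_antisymm (sum_le_sum hm_one) ?_)
    rwa [map_sub, Pi.sub_apply, hval, sub_zero, hF_smul,
      netOutflow_sum_smul_unitFlow hst hpath] at hm_val
  have hm_sum : ∑ P ∈ stPaths E s t, m P • unitFlow P = F :=
    hF_smul ▸ sum_congr rfl fun P hP => by rw [hm_eq P hP]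
  rw [hm_sum] at hm_le
  simpa using hm_le

theorem not_hasDirectedCycle_of_forall_exists_private_arc (hst : s ≠ t)
    (hcover : ∀ e ∈ E, ∃ P, IsSTPath E s t P ∧ e ∈ P)
    (hprivate : ∀ P ∈ stPaths E s t, ∃ e ∈ P, ∀ Q ∈ stPaths E s t, e ∈ Q → Q = P) :
    ¬ HasDirectedCycle E := by
  intro hcycle
  obtain ⟨C, hCE, ⟨x, hx⟩, hC⟩ := hcycle.exists_netOutflow_unitFlow_eq_zero
  have hC_flow : IsFlow E s t (unitFlow C) :=
    ⟨unitFlow_nonneg C, fun e he => unitFlow_apply_of_notMem fun h => he (hCE h), by simp [hC]⟩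
  have hC_le : unitFlow C ≤ ∑ P ∈ stPaths E s t, unitFlow P := by
    rw [← one_smul ℝ (unitFlow C)]
    refine smul_unitFlow_le (sum_nonneg fun P _ => unitFlow_nonneg P) fun e he => ?_
    obtain ⟨P, hP, heP⟩ := hcover e (hCE he)
    rw [← unitFlow_apply_of_mem heP]
    exact single_le_sum (fun Q _ => unitFlow_nonneg Q) (mem_stPaths.2 hP) e
  have hx_nonpos := hC_flow.nonpos_of_le_sum_unitFlow hst hprivate hC_le (by simp [hC]) x
  rw [unitFlow_apply_of_mem hx] at hx_nonpos
  exact zero_lt_one.not_ge hx_nonpos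

end Decomposition

section Branching

variable {V : Type*} [Fintype V] [DecidableEq V] {E : Finset (V × V)} {s t : V} {l₁ l₂ : List V}

/-- In `P ∪ Q`, the flow on `e` divides between an arc `y₁` of `P` only and an arc `y₂` of `Q`
only. -/
structure IsBranching (s t : V) (P Q : Finset (V × V)) (e y₁ y₂ : V × V) : Prop where
  mem_left : y₁ ∈ P
  notMem_right : y₁ ∉ Q
  mem_right : y₂ ∈ Q
  notMem_left : y₂ ∉ P
  flow_eq : ∀ f, IsFlow (P ∪ Q) s t f → f e = f y₁ + f y₂

namespace IsBranching

variable {P Q : Finset (V × V)} {e y₁ y₂ : V × V} {f : V × V → ℝ}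

theorem swap (h : IsBranching t s (P.image Prod.swap) (Q.image Prod.swap) e.swap y₁ y₂) :
    IsBranching s t P Q e y₁.swap y₂.swap := by
  have mem_swap {S : Finset (V × V)} {x : V × V} : x ∈ S.image Prod.swap ↔ x.swap ∈ S := by
    obtain ⟨a, b⟩ := x
    simp [Prod.ext_iff]
  refine ⟨mem_swap.1 h.mem_left, mt mem_swap.2 h.notMem_right, mem_swap.1 h.mem_right,
    mt mem_swap.2 h.notMem_left, fun f hf => ?_⟩
  have hf_swap := hf.comp_swap
  rw [image_union] at hf_swap
  simpa using h.flow_eq (f ∘ Prod.swap) hf_swap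

theorem eq_zero_of_isFlow_erase (h : IsBranching s t P Q e y₁ y₂)
    (hf : IsFlow ((P ∪ Q).erase e) s t f) : f y₁ = 0 ∧ f y₂ = 0 := by
  have hsplit := h.flow_eq f (hf.mono (erase_subset e _))
  rw [hf.eq_zero e (notMem_erase e _)] at hsplit
  exact (add_eq_zero_iff_of_nonneg (hf.nonneg y₁) (hf.nonneg y₂)).1 hsplit.symm

theorem eq_zero_of_isFlow_erase_erase (h : IsBranching s t P Q e y₁ y₂)
    (hf : IsFlow (((P ∪ Q).erase y₂).erase y₁) s t f) : f e = 0 := by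
  rw [h.flow_eq f (hf.mono ((erase_subset y₁ _).trans (erase_subset y₂ _))),
    hf.eq_zero y₁ (notMem_erase y₁ _),
    hf.eq_zero y₂ fun hy => notMem_erase y₂ _ (mem_of_mem_erase hy), add_zero]

end IsBranching

theorem IsPathList.flow_eq_sum_of_common_arc {f : V × V → ℝ} {u v w₁ w₂ : V}
    (h₁ : IsPathList E s t l₁) (h₂ : IsPathList E s t l₂)
    (huv₁ : (u, v) ∈ arcsOf l₁) (huv₂ : (u, v) ∈ arcsOf l₂)
    (hvw₁ : (v, w₁) ∈ arcsOf l₁) (hvw₂ : (v, w₂) ∈ arcsOf l₂)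
    (hf : IsFlow (arcsOf l₁ ∪ arcsOf l₂) s t f) :
    f (u, v) = ∑ w ∈ {w₁, w₂}, f (v, w) := by
  have hin : ∑ x, f (x, v) = f (u, v) := by
    refine sum_eq_single_of_mem u (mem_univ u) fun x _ hx => hf.eq_zero _ fun hmem => hx ?_
    rcases mem_union.1 hmem with h | h
    · exact fst_eq_of_mem_arcsOf h₁.1 h huv₁
    · exact fst_eq_of_mem_arcsOf h₂.1 h huv₂
  have hout : ∑ w ∈ {w₁, w₂}, f (v, w) = ∑ w, f (v, w) := by
    refine sum_subset (subset_univ _) fun w _ hw => hf.eq_zero _ fun hmem => hw ?_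
    rcases mem_union.1 hmem with h | h
    · simp [snd_eq_of_mem_arcsOf h₁.1 h hvw₁]
    · simp [snd_eq_of_mem_arcsOf h₂.1 h hvw₂]
  have hconserve := hf.conserve v (h₁.snd_ne_source huv₁) (h₁.fst_ne_sink hvw₁)
  rw [netOutflow_apply, hin, ← hout] at hconserve
  exact (sub_eq_zero.1 hconserve).symm

/-- Follow the common continuation of both paths to the vertex where they part: up to there, each
vertex has a single arc of the two paths entering it, and a single one leaving it. -/
theorem IsPathList.exists_isBranching_of_suffix_ne (h₁ : IsPathList E s t l₁)
    (h₂ : IsPathList E s t l₂) {u v : V} {r₁ r₂ : List V} (hr₁ : u :: v :: r₁ <:+ l₁)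
    (hr₂ : u :: v :: r₂ <:+ l₂) (hne : r₁ ≠ r₂) :
    ∃ y₁ y₂, IsBranching s t (arcsOf l₁) (arcsOf l₂) (u, v) y₁ y₂ := by
  induction r₁ generalizing u v r₂ with
  | nil =>
    obtain ⟨w, r, rfl⟩ := List.exists_cons_of_ne_nil hne.symm
    exact absurd (h₁.eq_sink_of_suffix hr₁)
      (h₂.fst_ne_sink (mem_arcsOf_of_suffix ((List.suffix_cons u _).trans hr₂)))
  | cons w₁ r₁ ih =>
    have htail₁ := (List.suffix_cons u (v :: w₁ :: r₁)).trans hr₁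
    cases r₂ with
    | nil => exact absurd (h₂.eq_sink_of_suffix hr₂) (h₁.fst_ne_sink (mem_arcsOf_of_suffix htail₁))
    | cons w₂ r₂ =>
      have htail₂ := (List.suffix_cons u (v :: w₂ :: r₂)).trans hr₂
      have hvw₁ := mem_arcsOf_of_suffix htail₁
      have hvw₂ := mem_arcsOf_of_suffix htail₂
      have hsplit := fun f => h₁.flow_eq_sum_of_common_arc (f := f) h₂ (mem_arcsOf_of_suffix hr₁)
        (mem_arcsOf_of_suffix hr₂) hvw₁ hvw₂
      by_cases hw : w₁ = w₂
      · subst hw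
        obtain ⟨y₁, y₂, hy⟩ := ih htail₁ htail₂ (by simpa using hne)
        exact ⟨y₁, y₂, { hy with
          flow_eq := fun f hf => by simpa [hy.flow_eq f hf] using hsplit f hf }⟩
      · exact ⟨(v, w₁), (v, w₂), hvw₁, fun h => hw (snd_eq_of_mem_arcsOf h₂.1 h hvw₂), hvw₂,
          fun h => hw (snd_eq_of_mem_arcsOf h₁.1 hvw₁ h), fun f hf => by
            rw [hsplit f hf, sum_pair hw]⟩

theorem IsPathList.exists_isBranching (h₁ : IsPathList E s t l₁) (h₂ : IsPathList E s t l₂)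
    {e : V × V} (he₁ : e ∈ arcsOf l₁) (he₂ : e ∈ arcsOf l₂) (hne : l₁ ≠ l₂) :
    ∃ y₁ y₂, IsBranching s t (arcsOf l₁) (arcsOf l₂) e y₁ y₂ := by
  obtain ⟨u, v⟩ := e
  obtain ⟨q₁, r₁, hl₁⟩ := mem_arcsOf_iff_infix.1 he₁
  obtain ⟨q₂, r₂, hl₂⟩ := mem_arcsOf_iff_infix.1 he₂
  by_cases hr : r₁ = r₂
  · have hq : q₁.reverse ≠ q₂.reverse := by
      rintro hq
      exact hne (by rw [← hl₁, ← hl₂, hr, List.reverse_injective hq])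
    obtain ⟨y₁, y₂, hy⟩ := h₁.reverse.exists_isBranching_of_suffix_ne h₂.reverse
      (u := v) (v := u) ⟨r₁.reverse, by simp [← hl₁]⟩ ⟨r₂.reverse, by simp [← hl₂]⟩ hq
    rw [arcsOf_reverse, arcsOf_reverse] at hy
    exact ⟨y₁.swap, y₂.swap, hy.swap⟩
  · exact h₁.exists_isBranching_of_suffix_ne h₂ ⟨q₁, by simp [← hl₁]⟩ ⟨q₂, by simp [← hl₂]⟩ hr

end Branching

theorem GameConvex.sub_erase_le_sub_erase {V : Type*} [DecidableEq V] {E S T : Finset (V × V)}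
    {γ : Finset (V × V) → ℝ} {e : V × V} (hconv : GameConvex E γ) (hS : e ∈ S) (hST : S ⊆ T)
    (hT : T ⊆ E) : γ S - γ (S.erase e) ≤ γ T - γ (T.erase e) := by
  have h := hconv e (hT (hST hS)) _ _ (erase_subset_erase e hST) (erase_subset_erase e hT)
  rwa [insert_erase hS, insert_erase (hST hS)] at h

section Game

variable {V : Type*} [Fintype V] [DecidableEq V] {E S T N P Q : Finset (V × V)} {c : V × V → ℝ}
  {s t : V} {γ : Finset (V × V) → ℝ} {f : V × V → ℝ} {e y₁ y₂ : V × V} {r : ℝ}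

theorem sum_filter_fst_eq (hf : ∀ e ∉ E, f e = 0) (v : V) :
    ∑ e ∈ E with e.1 = v, f e = ∑ w, f (v, w) := by
  rw [sum_filter, sum_subset (subset_univ E) fun e _ he => by simp [hf e he],
    Fintype.sum_prod_type, sum_comm]
  simp

theorem sum_filter_snd_eq (hf : ∀ e ∉ E, f e = 0) (v : V) :
    ∑ e ∈ E with e.2 = v, f e = ∑ u, f (u, v) := by
  rw [sum_filter, sum_subset (subset_univ E) fun e _ he => by simp [hf e he],
    Fintype.sum_prod_type_right, sum_comm]
  simp

theorem flowValue_eq_netOutflow (hf : ∀ e ∉ E, f e = 0) : flowValue E s f = netOutflow f s := by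
  rw [flowValue, sum_filter_fst_eq hf, sum_filter_snd_eq hf, netOutflow_apply]

theorem isFeasibleFlow_iff (hS : S ⊆ E) :
    IsFeasibleFlow E c s t S f ↔ IsFlow S s t f ∧ ∀ e ∈ E, f e ≤ c e := by
  have hconserve (hf : ∀ e ∉ S, f e = 0) (v : V) :
      ∑ e ∈ E with e.2 = v, f e = ∑ e ∈ E with e.1 = v, f e ↔ netOutflow f v = 0 := by
    have hfE : ∀ e ∉ E, f e = 0 := fun e he => hf e fun h => he (hS h)
    rw [sum_filter_fst_eq hfE, sum_filter_snd_eq hfE, netOutflow_apply, sub_eq_zero, eq_comm]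
  constructor
  · rintro ⟨hbound, hzero, hcons⟩
    refine ⟨⟨fun e => ?_, hzero, fun v hs ht => (hconserve hzero v).1 (hcons v hs ht)⟩,
      fun e he => (hbound e he).2⟩
    by_cases he : e ∈ E
    · exact (hbound e he).1
    · exact (hzero e fun h => he (hS h)).ge
  · rintro ⟨hf, hle⟩
    exact ⟨fun e he => ⟨hf.nonneg e, hle e he⟩, hf.eq_zero,
      fun v hs ht => (hconserve hf.eq_zero v).2 (hf.conserve v hs ht)⟩

namespace IsFlowGame

theorem netOutflow_le (hγ : IsFlowGame E c s t γ) (hS : S ⊆ E) (hf : IsFlow S s t f)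
    (hle : ∀ e ∈ E, f e ≤ c e) : netOutflow f s ≤ γ S := by
  rw [← flowValue_eq_netOutflow fun e he => hf.eq_zero e fun h => he (hS h)]
  exact (hγ S hS).2 ⟨f, (isFeasibleFlow_iff hS).2 ⟨hf, hle⟩, rfl⟩

theorem exists_isFlow_netOutflow_eq (hγ : IsFlowGame E c s t γ) (hS : S ⊆ E) :
    ∃ f, IsFlow S s t f ∧ (∀ e ∈ E, f e ≤ c e) ∧ netOutflow f s = γ S := by
  obtain ⟨f, hf, hval⟩ := (hγ S hS).1
  obtain ⟨hflow, hle⟩ := (isFeasibleFlow_iff hS).1 hf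
  refine ⟨f, hflow, hle, ?_⟩
  rw [← hval, flowValue_eq_netOutflow fun e he => hflow.eq_zero e fun h => he (hS h)]

theorem mono (hγ : IsFlowGame E c s t γ) (hST : S ⊆ T) (hT : T ⊆ E) : γ S ≤ γ T := by
  obtain ⟨f, hf, hle, hval⟩ := hγ.exists_isFlow_netOutflow_eq (hST.trans hT)
  exact hval ▸ hγ.netOutflow_le hT (hf.mono hST) hle

theorem le_erase_of_forall_isFlow (hγ : IsFlowGame E c s t γ) (hS : S ⊆ E)
    (h : ∀ f, IsFlow S s t f → f e = 0) : γ S ≤ γ (S.erase e) := by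
  obtain ⟨f, hf, hle, hval⟩ := hγ.exists_isFlow_netOutflow_eq hS
  exact hval ▸ hγ.netOutflow_le ((erase_subset e S).trans hS) (hf.erase (h f hf)) hle

theorem le_apply_path (hγ : IsFlowGame E c s t γ) (hst : s ≠ t) (hc : ∀ e ∈ E, 0 < c e)
    (hP : IsSTPath E s t P) (hr : 0 ≤ r) (hrc : ∀ x ∈ P, r ≤ c x) : r ≤ γ P := by
  have hflow : IsFlow P s t (r • unitFlow P) := (hP.of_subset subset_rfl).isFlow_unitFlow.smul hr
  have hval : netOutflow (r • unitFlow P) s = r := by simp [hP.netOutflow_unitFlow, hst]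
  rw [← hval]
  refine hγ.netOutflow_le hP.subset hflow fun x hx => ?_
  by_cases hxP : x ∈ P
  · simpa [unitFlow_apply_of_mem hxP] using hrc x hxP
  · simpa [unitFlow_apply_of_notMem hxP] using (hc x hx).le

theorem apply_path_erase_nonpos (hγ : IsFlowGame E c s t γ) (hP : IsSTPath E s t P) (he : e ∈ P) :
    γ (P.erase e) ≤ 0 := by
  obtain ⟨f, hf, -, hval⟩ := hγ.exists_isFlow_netOutflow_eq ((erase_subset e P).trans hP.subset)
  by_contra! hpos
  obtain ⟨Q, hQ, -⟩ := hf.exists_isSTPath_pos (hval ▸ hpos)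
  have hQP : Q = P := hQ.eq_of_subset hP (hQ.subset.trans (erase_subset e P))
  exact notMem_erase e P (hQ.subset (hQP ▸ he))

/-- Of a path decomposition of a maximum flow, the paths through `e` carry at most `c e`, and the
others form a flow avoiding `e`. -/
theorem le_erase_add (hγ : IsFlowGame E c s t γ) (hst : s ≠ t) (hN : N ⊆ E) (he : e ∈ E) :
    γ N ≤ γ (N.erase e) + c e := by
  obtain ⟨f, hf, hle, hval⟩ := hγ.exists_isFlow_netOutflow_eq hN
  obtain ⟨m, hm, hm_le, hm_val⟩ := hf.exists_path_decomposition hst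
  have hthrough : ∑ P ∈ stPaths N s t with e ∈ P, m P ≤ c e :=
    calc ∑ P ∈ stPaths N s t with e ∈ P, m P
        = (∑ P ∈ stPaths N s t, m P • unitFlow P) e := by
          simp [sum_filter, Finset.sum_apply, unitFlow, Set.indicator_apply]
      _ ≤ c e := (hm_le e).trans (hle e he)
  have hpath : ∀ P ∈ (stPaths N s t).filter (e ∉ ·), IsSTPath (N.erase e) s t P := by
    intro P hP
    obtain ⟨hPN, heP⟩ := mem_filter.1 hP
    have hPN := mem_stPaths.1 hPN
    exact hPN.of_subset (subset_erase.2 ⟨hPN.subset, heP⟩)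
  have havoid : ∑ P ∈ stPaths N s t with e ∉ P, m P ≤ γ (N.erase e) := by
    rw [← netOutflow_sum_smul_unitFlow hst hpath]
    refine hγ.netOutflow_le ((erase_subset e N).trans hN)
      (IsFlow.sum fun P hP => (hpath P hP).isFlow_unitFlow.smul (hm P)) fun x hx => ?_
    have hsub : ∑ P ∈ stPaths N s t with e ∉ P, m P • unitFlow P ≤
        ∑ P ∈ stPaths N s t, m P • unitFlow P :=
      sum_le_sum_of_subset_of_nonneg (filter_subset _ _) fun P _ _ =>
        smul_nonneg (hm P) (unitFlow_nonneg P)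
    exact (hsub x).trans ((hm_le x).trans (hle x hx))
  rw [← sum_filter_add_sum_filter_not _ (e ∈ ·)] at hm_val
  linarith

end IsFlowGame

theorem IsFlowGame.erase_add_le_of_path_subset (hγ : IsFlowGame E c s t γ)
    (hconv : GameConvex E γ) (hst : s ≠ t) (hc : ∀ e ∈ E, 0 < c e) (hP : IsSTPath E s t P)
    (he : e ∈ P) (hPT : P ⊆ T) (hT : T ⊆ E) (hr : 0 ≤ r) (hrc : ∀ x ∈ P, r ≤ c x) :
    γ (T.erase e) + r ≤ γ T := by
  have hmarginal := hconv.sub_erase_le_sub_erase he hPT hT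
  have hpath := hγ.le_apply_path hst hc hP hr hrc
  have herase := hγ.apply_path_erase_nonpos hP he
  linarith

/-- A flow in `P ∪ Q` uses `e` if and only if it uses `y₁` or `y₂`. Without `y₂` the arc `e` adds
`c e` along `P`, and without `y₁` it adds some positive amount along `Q`; by convexity it adds at
least the sum of the two in `P ∪ Q`, which is more than its capacity. -/
theorem IsFlowGame.not_isBranching_of_forall_le (hγ : IsFlowGame E c s t γ)
    (hconv : GameConvex E γ) (hst : s ≠ t) (hc : ∀ e ∈ E, 0 < c e) (hP : IsSTPath E s t P)
    (hQ : IsSTPath E s t Q) (heP : e ∈ P) (heQ : e ∈ Q) (hmin : ∀ x ∈ P, c e ≤ c x) :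
    ¬ IsBranching s t P Q e y₁ y₂ := by
  intro hy
  obtain ⟨q, hqQ, hq⟩ := exists_min_image Q c ⟨e, heQ⟩
  have hq_pos : 0 < c q := hc q (hQ.subset hqQ)
  have heE : e ∈ E := hP.subset heP
  set N := P ∪ Q
  have hN : N ⊆ E := union_subset hP.subset hQ.subset
  have hN_erase (x : V × V) : N.erase x ⊆ E := (erase_subset x N).trans hN
  have hadd_P : γ ((N.erase y₂).erase e) + c e ≤ γ (N.erase y₂) :=
    hγ.erase_add_le_of_path_subset hconv hst hc hP heP
      (subset_erase.2 ⟨subset_union_left, hy.notMem_left⟩) (hN_erase y₂) (hc e heE).le hmin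
  have hadd_Q : γ ((N.erase y₁).erase e) + c q ≤ γ (N.erase y₁) :=
    hγ.erase_add_le_of_path_subset hconv hst hc hQ heQ
      (subset_erase.2 ⟨subset_union_right, hy.notMem_right⟩) (hN_erase y₁) hq_pos.le hq
  have hN_le : γ N ≤ γ (N.erase e) + c e := hγ.le_erase_add hst hN heE
  have herase_y₁ : γ (N.erase e) ≤ γ ((N.erase y₁).erase e) := erase_right_comm (a := e) ▸
    hγ.le_erase_of_forall_isFlow (hN_erase e) fun f hf => (hy.eq_zero_of_isFlow_erase hf).1
  have herase_y₂ : γ (N.erase e) ≤ γ ((N.erase y₂).erase e) := erase_right_comm (a := e) ▸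
    hγ.le_erase_of_forall_isFlow (hN_erase e) fun f hf => (hy.eq_zero_of_isFlow_erase hf).2
  have herase_e : γ ((N.erase y₂).erase y₁) ≤ γ (N.erase e) :=
    (hγ.le_erase_of_forall_isFlow ((erase_subset y₁ _).trans (hN_erase y₂))
      fun f hf => hy.eq_zero_of_isFlow_erase_erase hf).trans
      (hγ.mono (erase_subset_erase e ((erase_subset y₁ _).trans (erase_subset y₂ N))) (hN_erase e))
  have hmarginal : γ (N.erase y₂) - γ ((N.erase y₂).erase y₁) ≤ γ N - γ (N.erase y₁) :=
    hconv.sub_erase_le_sub_erase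
      (mem_erase.2 ⟨fun h => hy.notMem_left (h ▸ hy.mem_left), mem_union_left Q hy.mem_left⟩)
      (erase_subset y₂ N) hN
  linarith

theorem IsFlowGame.eq_of_mem_of_forall_le (hγ : IsFlowGame E c s t γ) (hconv : GameConvex E γ)
    (hst : s ≠ t) (hc : ∀ e ∈ E, 0 < c e) (hP : IsSTPath E s t P) (hQ : IsSTPath E s t Q)
    (heP : e ∈ P) (heQ : e ∈ Q) (hmin : ∀ x ∈ P, c e ≤ c x) : Q = P := by
  have ⟨l₁, hl₁, hP_eq⟩ := hP
  have ⟨l₂, hl₂, hQ_eq⟩ := hQ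
  by_contra hne
  obtain ⟨y₁, y₂, hy⟩ := hl₁.exists_isBranching hl₂ (hP_eq ▸ heP) (hQ_eq ▸ heQ)
    fun h => hne (by rw [hP_eq, hQ_eq, h])
  rw [← hP_eq, ← hQ_eq] at hy
  exact hγ.not_isBranching_of_forall_le hconv hst hc hP hQ heP heQ hmin hy

end Game

/-- Acyclicity.  If every arc of the flow network lies on some
`s`-`t` path and the flow game is convex, then the network is acyclic. -/
theorem acyclicity
    {V : Type*} [Fintype V] [DecidableEq V]
    (E : Finset (V × V)) (c : V × V → ℝ) (s t : V) (γ : Finset (V × V) → ℝ)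
    (hst : s ≠ t) (hc : ∀ e ∈ E, 0 < c e)
    (hγ : IsFlowGame E c s t γ)
    (hcover : ∀ e ∈ E, ∃ P : Finset (V × V), IsSTPath E s t P ∧ e ∈ P)
    (hconv : GameConvex E γ) :
    ¬ HasDirectedCycle E := by
  refine not_hasDirectedCycle_of_forall_exists_private_arc hst hcover fun P hP => ?_
  have hP := mem_stPaths.1 hP
  obtain ⟨e, he, hmin⟩ := exists_min_image P c (hP.nonempty hst)
  exact ⟨e, he, fun Q hQ heQ =>
    hγ.eq_of_mem_of_forall_le hconv hst hc hP (mem_stPaths.1 hQ) he heQ hmin⟩
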